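/- arXiv:2408.03442 — 3 statements merged into one kernel-verified Lean document; each statement's English description precedes it below -/
import Mathlib

section
/- Spectral theorem for quaternionic Hermitian matrices: let n be a positive integer and A an n×n matrix over the Hamilton quaternions ℍ with Aᴴ = A, where ᴴ denotes the conjugate transpose with respect to quaternionic conjugation. Then there exist an n×n matrix U over ℍ with Uᴴ·U = U·Uᴴ = 1 and real numbers d₁, …, d_n such that A = Uᴴ·D·U, where D is the diagonal matrix whose entries are the real scalars d₁, …, d_n. -/
/-!
Unit eigenvectors are collected one at a time. Suppose `v₁, …, v_k` are orthonormal vectors in `ℍⁿ`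
(for the quaternionic form `xᴴ y`) with `A vᵢ = dᵢ vᵢ`, `dᵢ` real, and `k < n`. The set `W` of
vectors `x` with `vᵢᴴ x = 0` for all `i` is a real subspace of `ℍⁿ`, nonzero because it is cut out by
`4k < 4n` real equations, and `A`-invariant because `A` is Hermitian. For the real inner product
`Re (xᴴ y)` the real-linear operator `x ↦ A x` is symmetric, so its restriction to `W` has a real
eigenvalue; a normalized eigenvector is the next `v` (`exists_eigenvector_orthogonal`).
For `k = n` the matrix `V` with columns `vᵢ` satisfies `Vᴴ V = 1`, hence also `V Vᴴ = 1`,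
and `A V = V D`; so `U = Vᴴ` works.
-/

open Quaternion Matrix

namespace QuaternionSpectral

/-- The column space `ℍⁿ` with the `ℓ²` norm, a real inner product space of dimension `4n`. -/
abbrev QVec (n : ℕ) := PiLp 2 (fun _ : Fin n => ℍ[ℝ])

lemma inner_eq_re_dotProduct {n : ℕ} (x y : QVec n) :
    inner ℝ x y = (star x.ofLp ⬝ᵥ y.ofLp).re := by
  have h (s : Finset (Fin n)) (f : Fin n → ℍ[ℝ]) : (∑ i ∈ s, f i).re = ∑ i ∈ s, (f i).re :=
    map_sum (QuaternionAlgebra.reₗ (R := ℝ) (-1) 0 (-1)) f s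
  rw [PiLp.inner_apply, dotProduct, h]
  refine Finset.sum_congr rfl fun i _ => ?_
  simp [Quaternion.inner_def]

/-- The quaternionic square norm `xᴴ x` is real, equal to `‖x‖²`. -/
lemma star_dotProduct_self {n : ℕ} (x : QVec n) :
    star x.ofLp ⬝ᵥ x.ofLp = ((‖x‖ ^ 2 : ℝ) : ℍ[ℝ]) := by
  have h (f : Fin n → ℝ) : ((∑ i, f i : ℝ) : ℍ[ℝ]) = ∑ i, (f i : ℍ[ℝ]) :=
    map_sum (algebraMap ℝ ℍ[ℝ]) f Finset.univ
  rw [PiLp.norm_sq_eq_of_L2, dotProduct, h]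
  refine Finset.sum_congr rfl fun i _ => ?_
  rw [Pi.star_apply, Quaternion.star_mul_self, Quaternion.normSq_eq_norm_mul_self, sq]

/-- Left multiplication by a quaternionic matrix, as a real-linear operator on `ℍⁿ`. -/
noncomputable def mulVecReal {n : ℕ} (A : Matrix (Fin n) (Fin n) ℍ[ℝ]) : QVec n →ₗ[ℝ] QVec n where
  toFun x := WithLp.toLp 2 (A *ᵥ x.ofLp)
  map_add' x y := by simp [Matrix.mulVec_add]
  map_smul' c x := by simp [Matrix.mulVec_smul]

/-- Pairing with a family of vectors, `x ↦ (vᵢᴴ x)ᵢ`; its kernel is the orthogonal complement. -/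
noncomputable def pairing {n k : ℕ} (v : Fin k → Fin n → ℍ[ℝ]) :
    QVec n →ₗ[ℝ] (Fin k → ℍ[ℝ]) where
  toFun x i := star (v i) ⬝ᵥ x.ofLp
  map_add' x y := by ext1 i; simp [dotProduct_add]
  map_smul' c x := by ext1 i; simp [dotProduct_smul]

lemma star_mulVec_dotProduct {n : ℕ} {A : Matrix (Fin n) (Fin n) ℍ[ℝ]} (hA : Aᴴ = A)
    (x y : Fin n → ℍ[ℝ]) : star (A *ᵥ x) ⬝ᵥ y = star x ⬝ᵥ (A *ᵥ y) := by
  rw [star_mulVec, hA, dotProduct_mulVec]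

lemma isSymmetric_mulVecReal {n : ℕ} {A : Matrix (Fin n) (Fin n) ℍ[ℝ]} (hA : Aᴴ = A) :
    (mulVecReal A).IsSymmetric := by
  intro x y
  rw [inner_eq_re_dotProduct, inner_eq_re_dotProduct]
  exact congrArg _ (star_mulVec_dotProduct hA _ _)

/-- Fewer than `n` eigenvectors with real eigenvalues always leave room for another unit
eigenvector orthogonal to all of them. -/
lemma exists_eigenvector_orthogonal {n k : ℕ} (hk : k < n) {A : Matrix (Fin n) (Fin n) ℍ[ℝ]}
    (hA : Aᴴ = A) (v : Fin k → Fin n → ℍ[ℝ]) (d : Fin k → ℝ)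
    (hv : ∀ i, A *ᵥ v i = d i • v i) :
    ∃ (x : Fin n → ℍ[ℝ]) (c : ℝ), star x ⬝ᵥ x = 1 ∧ (∀ i, star (v i) ⬝ᵥ x = 0) ∧
      A *ᵥ x = c • x := by
  have hker : LinearMap.ker (pairing v) ≠ ⊥ := by
    apply LinearMap.ker_ne_bot_of_finrank_lt
    rw [LinearEquiv.finrank_eq (WithLp.linearEquiv 2 ℝ (Fin n → ℍ[ℝ])), Module.finrank_pi_fintype,
      Module.finrank_pi_fintype]
    simp only [Quaternion.finrank_eq_four, Finset.sum_const, Finset.card_univ, Fintype.card_fin,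
      smul_eq_mul]
    omega
  have hinv : ∀ x ∈ LinearMap.ker (pairing v), mulVecReal A x ∈ LinearMap.ker (pairing v) := by
    intro x hx
    ext1 i
    have hxi : star (v i) ⬝ᵥ x.ofLp = 0 := congrFun hx i
    have hstar : star (d i • v i) = d i • star (v i) := by
      ext1 l
      exact Quaternion.star_smul _ _
    change star (v i) ⬝ᵥ (A *ᵥ x.ofLp) = 0
    rw [← star_mulVec_dotProduct hA, hv, hstar, smul_dotProduct, hxi, smul_zero]
  have : Nontrivial (LinearMap.ker (pairing v)) := Submodule.nontrivial_iff_ne_bot.mpr hker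
  obtain ⟨c, hc⟩ : ∃ c : ℝ, Module.End.HasEigenvalue ((mulVecReal A).restrict hinv) c :=
    ⟨_, ((isSymmetric_mulVecReal hA).restrict_invariant
      hinv).hasEigenvalue_iSup_of_finiteDimensional⟩
  obtain ⟨w, hw⟩ := hc.exists_hasEigenvector
  have hw0 : ‖(w : QVec n)‖ ≠ 0 := by
    simpa using hw.2
  have hAw : A *ᵥ (w : QVec n).ofLp = c • (w : QVec n).ofLp :=
    congrArg (fun y : LinearMap.ker (pairing v) => (y : QVec n).ofLp) hw.apply_eq_smul
  refine ⟨(‖(w : QVec n)‖⁻¹ • (w : QVec n)).ofLp, c, ?_, fun i => ?_, ?_⟩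
  · rw [star_dotProduct_self, norm_smul, norm_inv, norm_norm, inv_mul_cancel₀ hw0]
    simp
  · have h : star (v i) ⬝ᵥ (w : QVec n).ofLp = 0 := congrFun w.2 i
    rw [WithLp.ofLp_smul, dotProduct_smul, h, smul_zero]
  · rw [WithLp.ofLp_smul, mulVec_smul, hAw, smul_comm]

lemma exists_orthonormal_eigenvectors {n : ℕ} {A : Matrix (Fin n) (Fin n) ℍ[ℝ]} (hA : Aᴴ = A) :
    ∀ k ≤ n, ∃ (v : Fin k → Fin n → ℍ[ℝ]) (d : Fin k → ℝ),
      (∀ i j, star (v i) ⬝ᵥ v j = if i = j then 1 else 0) ∧ ∀ i, A *ᵥ v i = d i • v i := by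
  intro k
  induction k with
  | zero => exact fun _ => ⟨Fin.elim0, Fin.elim0, fun i => i.elim0, fun i => i.elim0⟩
  | succ k ih =>
    intro hk
    obtain ⟨v, d, hvv, hv⟩ := ih (by omega)
    obtain ⟨x, c, hxx, hvx, hx⟩ := exists_eigenvector_orthogonal (by omega) hA v d hv
    have hxv (i : Fin k) : star x ⬝ᵥ v i = 0 := by
      rw [← star_star (v i), star_dotProduct_star, hvx, star_zero]
    refine ⟨Fin.cons x v, Fin.cons c d, ?_, ?_⟩
    · simp [Fin.forall_fin_succ, hxx, hvx, hxv, hvv, Fin.succ_ne_zero, (Fin.succ_ne_zero _).symm]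
    · simp [Fin.forall_fin_succ, hx, hv]

end QuaternionSpectral

open QuaternionSpectral in
/-- Spectral theorem for quaternionic Hermitian matrices: any Hermitian `n × n`
matrix over the Hamilton quaternions is unitarily diagonalizable with real
eigenvalues. -/
theorem stmt13 (n : ℕ) (hn : 0 < n) (A : Matrix (Fin n) (Fin n) ℍ[ℝ])
    (hA : Aᴴ = A) :
    ∃ (U : Matrix (Fin n) (Fin n) ℍ[ℝ]) (d : Fin n → ℝ),
      Uᴴ * U = 1 ∧ U * Uᴴ = 1 ∧
      A = Uᴴ * Matrix.diagonal (fun i => ((d i : ℝ) : ℍ[ℝ])) * U := by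
  obtain ⟨v, d, hvv, hv⟩ := exists_orthonormal_eigenvectors hA n le_rfl
  let V : Matrix (Fin n) (Fin n) ℍ[ℝ] := Matrix.of fun i j => v j i
  have h1 : Vᴴ * V = 1 := by
    ext1 i j
    rw [Matrix.one_apply, ← hvv i j]
    rfl
  -- One-sided inverses of square matrices are two-sided over the division ring `ℍ` too.
  have h2 : V * Vᴴ = 1 := mul_eq_one_symm h1
  have h3 : A * V = V * Matrix.diagonal (fun i => ((d i : ℝ) : ℍ[ℝ])) := by
    ext1 i j
    rw [Matrix.mul_diagonal, ← Quaternion.coe_commutes, Quaternion.coe_mul_eq_smul]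
    exact congrFun (hv j) i
  refine ⟨Vᴴ, d, ?_, ?_, ?_⟩
  · rwa [conjTranspose_conjTranspose]
  · rwa [conjTranspose_conjTranspose]
  · rw [conjTranspose_conjTranspose, ← h3, Matrix.mul_assoc, h2, Matrix.mul_one]
end

section
/- Let ℓ be a prime, m ≥ 1 an integer, and λ ∈ ℤ. Then the character sum over 2×2 matrices modulo ℓ^m satisfies Σ_{x ∈ M₂(ℤ/ℓ^mℤ)} ω_m(λ·det x) = ℓ^{2m}·[λ]_m², where det x is computed from any integer lift of x (the value λ·det x modulo ℓ^m is well defined). -/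
/-!
Put `N = ℓ ^ m` and let `χ` be the standard additive character of `ℤ/Nℤ`. Since
`det = x₀₀ x₁₁ - x₀₁ x₁₀`, the sum factors as `B(lam) * B(-lam)` with
`B(c) = ∑_{a, b} χ(c a b)`. Summing over `a` first, orthogonality (`χ` is primitive) gives
`B(c) = N * #{b | c b = 0}`, and the kernel of multiplication by `c` on the cyclic group `ℤ/Nℤ`
has `gcd(N, c)` elements (`sum_bilinear`). Finally `gcd(ℓ ^ m, lam) = ℓ ^ min(m, v_ℓ(lam))`
(`gcd_prime_pow`).
-/

open Finset

lemma card_mul_eq_zero (N : ℕ) [NeZero N] (c : ℤ) :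
    #{b : ZMod N | (c : ZMod N) * b = 0} = N.gcd c.natAbs := by
  have h := IsAddCyclic.card_nsmulAddMonoidHom_ker (G := ZMod N) c.natAbs
  rw [Nat.card_zmod] at h
  rw [← h, ← Fintype.card_subtype, ← Nat.card_eq_fintype_card]
  refine Nat.card_congr (Equiv.subtypeEquivRight fun b => ?_)
  rw [AddMonoidHom.mem_ker, nsmulAddMonoidHom_apply, nsmul_eq_mul]
  obtain ⟨n, rfl | rfl⟩ := c.eq_nat_or_neg <;> simp

lemma sum_bilinear (N : ℕ) [NeZero N] (c : ℤ) :
    ∑ b : ZMod N, ∑ a : ZMod N, ZMod.stdAddChar ((c : ZMod N) * (a * b))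
      = (N : ℂ) * (N.gcd c.natAbs : ℕ) := by
  have h (b : ZMod N) : ∑ a : ZMod N, ZMod.stdAddChar ((c : ZMod N) * (a * b))
      = if (c : ZMod N) * b = 0 then (N : ℂ) else 0 := by
    have := AddChar.sum_mulShift ((c : ZMod N) * b) (ZMod.isPrimitive_stdAddChar N)
    simp only [ZMod.card, Nat.cast_ite, Nat.cast_zero] at this
    rw [← this]
    exact sum_congr rfl fun a _ => by congr 1; ring
  simp_rw [h]
  rw [← sum_filter, sum_const, card_mul_eq_zero, nsmul_eq_mul, mul_comm]

lemma gcd_prime_pow (ℓ : ℕ) (hℓ : ℓ.Prime) (m : ℕ) (lam : ℤ) (h0 : lam ≠ 0) :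
    (ℓ ^ m).gcd lam.natAbs = ℓ ^ min m (padicValInt ℓ lam) := by
  have := Fact.mk hℓ
  obtain ⟨k, hk, hg⟩ := (Nat.dvd_prime_pow hℓ).1 (Nat.gcd_dvd_left (ℓ ^ m) lam.natAbs)
  have hdvd (n : ℕ) : ℓ ^ n ∣ lam.natAbs ↔ n ≤ padicValInt ℓ lam :=
    padicValNat_dvd_iff_le (Int.natAbs_ne_zero.2 h0)
  rw [hg]
  congr 1
  refine le_antisymm (le_min hk ((hdvd k).1 (hg ▸ Nat.gcd_dvd_right _ _))) ?_
  rw [← Nat.pow_dvd_pow_iff_le_right hℓ.one_lt, ← hg]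
  exact Nat.dvd_gcd (pow_dvd_pow _ (min_le_left _ _)) ((hdvd _).2 (min_le_right _ _))

lemma sum_fin_eq_sum_zmod (N : ℕ) [NeZero N] (f : ZMod N → ℂ) :
    ∑ a : Fin N, f ((a : ℕ) : ZMod N) = ∑ z : ZMod N, f z := by
  refine Fintype.sum_bijective (fun a : Fin N => ((a : ℕ) : ZMod N)) ?_ _ _ fun _ => rfl
  rw [Fintype.bijective_iff_injective_and_card]
  refine ⟨fun a b h => Fin.ext ?_, by simp⟩
  have := congrArg ZMod.val h
  simpa [ZMod.val_natCast, Nat.mod_eq_of_lt a.2, Nat.mod_eq_of_lt b.2] using this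

/-- For a prime `ℓ`, `m ≥ 1` and `λ ∈ ℤ`, the character sum over `2 × 2` matrices
modulo `ℓ^m` satisfies `Σ_x ω_m(λ·det x) = ℓ^{2m}·[λ]_m²`, where
`ω_m(t) = exp(2πi·t/ℓ^m)` and `[λ]_m = ℓ^{min(m, v_ℓ(λ))}` with `v_ℓ(0) = ∞`. -/
theorem stmt17 (ℓ : ℕ) (hℓ : ℓ.Prime) (m : ℕ) (hm : 1 ≤ m) (lam : ℤ) :
    ∑ x : Fin 2 → Fin 2 → Fin (ℓ ^ m),
        Complex.exp (2 * Real.pi * Complex.I *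
          ((lam * (Matrix.of fun i j => ((x i j : ℕ) : ℤ)).det : ℤ) : ℂ) /
            (ℓ : ℂ) ^ m)
      = (ℓ : ℂ) ^ (2 * m) *
          (if lam = 0 then (ℓ : ℂ) ^ m
            else (ℓ : ℂ) ^ min m (padicValInt ℓ lam)) ^ 2 := by
  have : NeZero (ℓ ^ m) := ⟨pow_ne_zero _ hℓ.ne_zero⟩
  have hgcd : (((ℓ ^ m).gcd lam.natAbs : ℕ) : ℂ) = if lam = 0 then (ℓ : ℂ) ^ m
      else (ℓ : ℂ) ^ min m (padicValInt ℓ lam) := by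
    split_ifs with h
    · simp [h]
    · rw [gcd_prime_pow ℓ hℓ m lam h, Nat.cast_pow]
  rw [← hgcd]
  -- The summand splits into a factor in the diagonal and a factor in the antidiagonal entries.
  have hterm (x : Fin 2 → Fin 2 → Fin (ℓ ^ m)) :
      Complex.exp (2 * Real.pi * Complex.I *
          ((lam * (Matrix.of fun i j => ((x i j : ℕ) : ℤ)).det : ℤ) : ℂ) / (ℓ : ℂ) ^ m)
        = ZMod.stdAddChar ((lam : ZMod (ℓ ^ m)) *
              (((x 0 0 : ℕ) : ZMod (ℓ ^ m)) * ((x 1 1 : ℕ) : ZMod (ℓ ^ m)))) *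
          ZMod.stdAddChar (((-lam : ℤ) : ZMod (ℓ ^ m)) *
              (((x 0 1 : ℕ) : ZMod (ℓ ^ m)) * ((x 1 0 : ℕ) : ZMod (ℓ ^ m)))) := by
    rw [← AddChar.map_add_eq_mul, ← Nat.cast_pow, ← ZMod.stdAddChar_coe, Matrix.det_fin_two]
    congr 1
    simp only [Matrix.of_apply]
    push_cast
    ring
  simp_rw [hterm]
  let F : ℤ → ZMod (ℓ ^ m) → ZMod (ℓ ^ m) → ℂ := fun c a b =>
    ZMod.stdAddChar ((c : ZMod (ℓ ^ m)) * (a * b))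
  have hF (c : ℤ) : ∑ b : Fin (ℓ ^ m), ∑ a : Fin (ℓ ^ m),
      F c ((a : ℕ) : ZMod (ℓ ^ m)) ((b : ℕ) : ZMod (ℓ ^ m))
      = ((ℓ ^ m : ℕ) : ℂ) * ((ℓ ^ m).gcd c.natAbs : ℕ) := by
    rw [← sum_bilinear, ← sum_fin_eq_sum_zmod]
    exact sum_congr rfl fun b _ => sum_fin_eq_sum_zmod _ fun a => F c a _
  let e : (Fin 2 → Fin 2 → Fin (ℓ ^ m)) ≃
      (Fin (ℓ ^ m) × Fin (ℓ ^ m)) × (Fin (ℓ ^ m) × Fin (ℓ ^ m)) :=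
    { toFun := fun x => ((x 1 1, x 0 0), (x 1 0, x 0 1))
      invFun := fun y => ![![y.1.2, y.2.2], ![y.2.1, y.1.1]]
      left_inv := fun x => by
        funext i j
        fin_cases i <;> fin_cases j <;> rfl
      right_inv := fun y => rfl }
  calc _ = ∑ y : (Fin (ℓ ^ m) × Fin (ℓ ^ m)) × (Fin (ℓ ^ m) × Fin (ℓ ^ m)),
        F lam ((y.1.2 : ℕ) : ZMod (ℓ ^ m)) ((y.1.1 : ℕ) : ZMod (ℓ ^ m)) *
        F (-lam) ((y.2.2 : ℕ) : ZMod (ℓ ^ m)) ((y.2.1 : ℕ) : ZMod (ℓ ^ m)) :=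
        Fintype.sum_equiv e _ _ fun x => rfl
    _ = (∑ b : Fin (ℓ ^ m), ∑ a : Fin (ℓ ^ m),
          F lam ((a : ℕ) : ZMod (ℓ ^ m)) ((b : ℕ) : ZMod (ℓ ^ m))) *
        (∑ b : Fin (ℓ ^ m), ∑ a : Fin (ℓ ^ m),
          F (-lam) ((a : ℕ) : ZMod (ℓ ^ m)) ((b : ℕ) : ZMod (ℓ ^ m))) := by
        rw [← Fintype.sum_prod_type', ← Fintype.sum_prod_type', Fintype.sum_mul_sum,
          ← Fintype.sum_prod_type']
    _ = _ := by
        rw [hF, hF, Int.natAbs_neg]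
        push_cast
        ring
end

section
/- Let ℓ be a prime, m ≥ 0 an integer, and d₁, d₂ nonzero integers. Set v = min(m, v_ℓ(d₁)) and v' = min(m, v_ℓ(d₂)), and for each integer c with 0 ≤ c < ℓ^m set w(c) = min(m, v_ℓ(d₁), v_ℓ(c)), with the convention v_ℓ(0) = ∞. Then Σ_{c=0}^{ℓ^m − 1} exp(2πi·c·d₂/ℓ^m)·(Σ_{k=0}^{w(c)} ℓ^{−k}) = ℓ^{m−2v}·Σ_{j=0}^{v+v'−m} ℓ^{2j}, where the sum on the right-hand side is empty (equal to 0) when v + v' < m. -/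
/-!
Write the inner sum as a sum over those `k ≤ v` with `ℓ ^ k ∣ c` and exchange the two summations.
For fixed `k`, the substitution `c = ℓ ^ k * b` turns the sum over `c` into the full additive
character sum `∑ exp (2πi b d₂ / ℓ ^ (m - k))` over `b` modulo `ℓ ^ (m - k)` (`sum_range_dvd`),
which by orthogonality (`sum_exp_eq_ite`) is `ℓ ^ (m - k)` if `m - k ≤ v'`, and `0` otherwise.
What remains is the sum of `ℓ ^ (m - 2 k)` over `m - v' ≤ k ≤ v`, and `k = v - j` gives the
right-hand side.
-/

open Finset

/-- Orthogonality of additive characters modulo `N`. -/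
lemma sum_exp_eq_ite (N : ℕ) (hN : N ≠ 0) (d : ℤ) :
    ∑ b ∈ Finset.range N, Complex.exp (2 * Real.pi * Complex.I * (((b : ℤ) * d : ℤ) : ℂ) / (N : ℂ))
      = if (N : ℤ) ∣ d then (N : ℂ) else 0 := by
  have hN' : (N : ℂ) ≠ 0 := Nat.cast_ne_zero.mpr hN
  set z : ℂ := Complex.exp (2 * Real.pi * Complex.I * (d : ℂ) / (N : ℂ)) with hz
  have hterm : ∀ b : ℕ,
      Complex.exp (2 * Real.pi * Complex.I * (((b : ℤ) * d : ℤ) : ℂ) / (N : ℂ)) = z ^ b := by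
    intro b
    rw [hz, ← Complex.exp_nat_mul]
    congr 1
    push_cast
    ring
  have hone : z = 1 ↔ (N : ℤ) ∣ d := by
    rw [hz, Complex.exp_eq_one_iff]
    constructor
    · rintro ⟨n, hn⟩
      refine ⟨n, ?_⟩
      have h2 : (2 * Real.pi * Complex.I : ℂ) ≠ 0 := Complex.two_pi_I_ne_zero
      rw [div_eq_iff hN'] at hn
      have h3 : (2 * Real.pi * Complex.I : ℂ) * d = (2 * Real.pi * Complex.I) * (N * n) := by
        rw [hn]; ring
      exact_mod_cast mul_left_cancel₀ h2 h3
    · rintro ⟨n, rfl⟩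
      refine ⟨n, ?_⟩
      push_cast
      field_simp
  have hpow : z ^ N = 1 := by
    rw [hz, ← Complex.exp_nat_mul, Complex.exp_eq_one_iff]
    exact ⟨d, by field_simp⟩
  simp_rw [hterm]
  split_ifs with h
  · rw [hone.mpr h]
    simp
  · have hz1 : z - 1 ≠ 0 := sub_ne_zero.mpr fun h1 => h (hone.mp h1)
    have hg := geom_sum_mul z N
    rw [hpow, sub_self] at hg
    exact (mul_eq_zero.mp hg).resolve_right hz1

lemma sum_range_dvd (N M : ℕ) (hN : N ≠ 0) (f : ℕ → ℂ) :
    ∑ c ∈ Finset.range (N * M), (if N ∣ c then f c else 0)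
      = ∑ b ∈ Finset.range M, f (N * b) := by
  rw [← Finset.sum_filter]
  symm
  refine Finset.sum_bij' (fun b _ => N * b) (fun c _ => c / N) ?_ ?_ ?_ ?_ ?_
  · intro b hb
    simp only [Finset.mem_filter, Finset.mem_range] at hb ⊢
    exact ⟨Nat.mul_lt_mul_of_pos_left hb (Nat.pos_of_ne_zero hN), dvd_mul_right _ _⟩
  · intro c hc
    simp only [Finset.mem_filter, Finset.mem_range] at hc ⊢
    exact Nat.div_lt_of_lt_mul hc.1
  · intro b _
    exact Nat.mul_div_cancel_left b (Nat.pos_of_ne_zero hN)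
  · intro c hc
    exact Nat.mul_div_cancel' (Finset.mem_filter.mp hc).2
  · intros
    rfl

/-- The rank-2 local character sum evaluation: for a prime `ℓ`, `m ≥ 0`, nonzero
integers `d₁, d₂`, with `v = min(m, v_ℓ(d₁))`, `v' = min(m, v_ℓ(d₂))` and
`w(c) = min(m, v_ℓ(d₁), v_ℓ(c))` (with `v_ℓ(0) = ∞`), one has
`Σ_{c=0}^{ℓ^m−1} e^{2πi c d₂/ℓ^m}·(Σ_{k=0}^{w(c)} ℓ^{−k})
  = ℓ^{m−2v}·Σ_{j=0}^{v+v'−m} ℓ^{2j}`,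
the right-hand sum being empty when `v + v' < m`. -/
theorem stmt18 (ℓ : ℕ) (hℓ : ℓ.Prime) (m : ℕ) (d₁ d₂ : ℤ)
    (hd₁ : d₁ ≠ 0) (hd₂ : d₂ ≠ 0) (v v' : ℕ) (w : ℕ → ℕ)
    (hv : v = min m (padicValInt ℓ d₁)) (hv' : v' = min m (padicValInt ℓ d₂))
    (hw : ∀ c, w c = if c = 0 then min m (padicValInt ℓ d₁)
      else min (min m (padicValInt ℓ d₁)) (padicValNat ℓ c)) :
    ∑ c ∈ Finset.range (ℓ ^ m),
        Complex.exp (2 * Real.pi * Complex.I * (((c : ℤ) * d₂ : ℤ) : ℂ) /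
            (ℓ : ℂ) ^ m) *
          ∑ k ∈ Finset.range (w c + 1), ((ℓ : ℂ) ^ k)⁻¹
      = (ℓ : ℂ) ^ ((m : ℤ) - 2 * (v : ℤ)) *
          ∑ j ∈ Finset.range (v + v' + 1 - m), (ℓ : ℂ) ^ (2 * j) := by
  haveI : Fact ℓ.Prime := ⟨hℓ⟩
  have hl0 : (ℓ : ℂ) ≠ 0 := Nat.cast_ne_zero.mpr hℓ.ne_zero
  have hvm : v ≤ m := hv ▸ min_le_left _ _
  have hvm' : v' ≤ m := hv' ▸ min_le_left _ _
  have hwk : ∀ c k, k ∈ Finset.range (w c + 1) ↔ k ∈ Finset.range (v + 1) ∧ ℓ ^ k ∣ c := by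
    intro c k
    rw [hw, ← hv, Finset.mem_range, Finset.mem_range]
    split_ifs with hc
    · simp [hc]
    · rw [padicValNat_dvd_iff_le hc]
      omega
  have hdvd : ∀ k, ((ℓ ^ (m - k) : ℕ) : ℤ) ∣ d₂ ↔ m - k ≤ v' := by
    intro k
    rw [Nat.cast_pow, padicValInt_dvd_iff, hv']
    simp only [hd₂, false_or]
    omega
  have hinner : ∀ c, ∑ k ∈ Finset.range (w c + 1), ((ℓ : ℂ) ^ k)⁻¹
      = ∑ k ∈ Finset.range (v + 1), if ℓ ^ k ∣ c then ((ℓ : ℂ) ^ k)⁻¹ else 0 := by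
    intro c
    rw [← Finset.sum_filter]
    refine Finset.sum_congr ?_ fun _ _ => rfl
    ext k
    rw [hwk, Finset.mem_filter]
  have hk : ∀ k ∈ Finset.range (v + 1),
      ∑ c ∈ Finset.range (ℓ ^ m),
        Complex.exp (2 * Real.pi * Complex.I * (((c : ℤ) * d₂ : ℤ) : ℂ) / (ℓ : ℂ) ^ m) *
          (if ℓ ^ k ∣ c then ((ℓ : ℂ) ^ k)⁻¹ else 0)
      = if m - k ≤ v' then (ℓ : ℂ) ^ ((m : ℤ) - 2 * (k : ℤ)) else 0 := by
    intro k hk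
    have hkm : k ≤ m := (Nat.lt_succ_iff.mp (Finset.mem_range.mp hk)).trans hvm
    have hsplit : ℓ ^ m = ℓ ^ k * ℓ ^ (m - k) := by rw [← pow_add, Nat.add_sub_cancel' hkm]
    have hsplitC : (ℓ : ℂ) ^ m = (ℓ : ℂ) ^ k * (ℓ : ℂ) ^ (m - k) := by
      rw [← pow_add, Nat.add_sub_cancel' hkm]
    simp_rw [mul_ite, mul_zero]
    rw [hsplit, sum_range_dvd _ _ (pow_ne_zero _ hℓ.ne_zero)
      (fun c => Complex.exp (2 * Real.pi * Complex.I * (((c : ℤ) * d₂ : ℤ) : ℂ) / (ℓ : ℂ) ^ m) *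
        ((ℓ : ℂ) ^ k)⁻¹), ← Finset.sum_mul]
    have hchar := sum_exp_eq_ite (ℓ ^ (m - k)) (pow_ne_zero _ hℓ.ne_zero) d₂
    have hreduce : ∀ b : ℕ,
        Complex.exp (2 * Real.pi * Complex.I * ((((ℓ ^ k * b : ℕ) : ℤ) * d₂ : ℤ) : ℂ) / (ℓ : ℂ) ^ m)
        = Complex.exp (2 * Real.pi * Complex.I * (((b : ℤ) * d₂ : ℤ) : ℂ) /
            ((ℓ ^ (m - k) : ℕ) : ℂ)) := by
      intro b
      congr 1
      rw [hsplitC]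
      push_cast
      field_simp
    simp_rw [hreduce]
    rw [hchar]
    simp only [hdvd]
    split_ifs
    · rw [Nat.cast_pow, ← zpow_natCast, ← zpow_natCast, ← zpow_neg, ← zpow_add₀ hl0]
      congr 1
      omega
    · simp
  simp_rw [hinner, Finset.mul_sum]
  rw [Finset.sum_comm, Finset.sum_congr rfl hk]
  -- Only `j ≤ v + v' - m` survive in the reflected sum `k = v - j`.
  rw [← Finset.sum_range_reflect, ← Finset.sum_filter]
  refine Finset.sum_congr ?_ ?_
  · ext j
    simp only [Finset.mem_filter, Finset.mem_range]
    omega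
  · intro j hj
    have hjv : j ≤ v := by
      have := Finset.mem_range.mp hj
      omega
    rw [← zpow_natCast, ← zpow_add₀ hl0]
    congr 1
    omega
end
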